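/- Assume q ≡ 3 (mod 4). Let p and r be distinct internal points such that the line through p and r is a secant. Then |H_{p,r} ∩ C| is even for each of the following class sets C: C = {1}; C = [4]; C = [θ] for any nonzero square θ ≠ 4 with θ-4 a nonzero square; C = [π] for any nonzero square π ≠ 4 with π-4 a nonsquare. -/

import Mathlib

/-!
Let `ℓ` be the secant through `p` and `r`, and let `S` be the harmonic homology of the plane that
fixes `ℓ` pointwise, sends the pole of `ℓ` to its negative, and preserves the conic. Since `S` is
an isometry fixing both `p` and `r` and normalizing `H`, the map `M ↦ S M S` is an involution of
`H_{p,r}` preserving traces, hence of `H_{p,r} ∩ C` for each class set `C` of the theorem.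

The involution has no fixed points. If `M ∈ H_{p,r}` commutes with `S`, then `u = r M⁻¹` is again
fixed by `S`, so lies on `ℓ`, and `u` is conjugate to `p`. For conjugate vectors on a secant line
the Gram determinant gives `4 Q(u) Q(p) = -k²` (`neg_four_mul_Qf_mul_Qf`). As `Q(u) = Q(r)`, and
`Q(p)`, `Q(r)` are nonsquares, their product is a nonzero square, whence `-1` is a square. This is
impossible for `q ≡ 3 (mod 4)`. A set with a fixed-point-free involution has even cardinality.

In coordinates `S` is the symmetric square of the `2 × 2` matrix `(α, β; γ, -α)` with
`α² + βγ = 1`, and `ℓ = [β, -2α, -γ]`.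
-/

open scoped Classical

noncomputable section

namespace ConicPaper

variable (K : Type) [Field K] [Fintype K]

/-- Points (and also lines, via homogeneous coordinates) of `PG(2,q)`. -/
abbrev Pt := Projectivization K (Fin 3 → K)

instance : Fintype (Pt K) := @Fintype.ofFinite _ (Quotient.finite _)

/-- `a` is a nonsquare in `K`. -/
def Nonsq (a : K) : Prop := ¬ IsSquare a

/-- The quadratic form `Q(x0,x1,x2) = x1^2 - x0*x2` defining the conic. -/
def Qf (v : Fin 3 → K) : K := v 1 ^ 2 - v 0 * v 2

/-- A point is internal when `Q` of (a representative of) it is a nonsquare. -/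
def Internal (p : Pt K) : Prop := Nonsq K (Qf K p.rep)

/-- A point is external when `Q` of it is a nonzero square. -/
def External (p : Pt K) : Prop := Qf K p.rep ≠ 0 ∧ IsSquare (Qf K p.rep)

/-- The point `p` lies on the line `ℓ = [b0,b1,b2]`. -/
def OnL (p ℓ : Pt K) : Prop :=
  p.rep 0 * ℓ.rep 0 + p.rep 1 * ℓ.rep 1 + p.rep 2 * ℓ.rep 2 = 0

/-- Discriminant `b1^2 - 4 b0 b2` of a line. -/
def lineDisc (ℓ : Pt K) : K := ℓ.rep 1 ^ 2 - 4 * ℓ.rep 0 * ℓ.rep 2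

/-- A line is a passant when its discriminant is a nonsquare. -/
def Passant (ℓ : Pt K) : Prop := Nonsq K (lineDisc K ℓ)

/-- A line is a secant when its discriminant is a nonzero square. -/
def Secant (ℓ : Pt K) : Prop := lineDisc K ℓ ≠ 0 ∧ IsSquare (lineDisc K ℓ)

/-- The incidence pairing of the vector `w` with the polar line
`p^⊥ = [z, -2y, x]` of the point `p = (x,y,z)`. -/
def perpDot (p : Pt K) (w : Fin 3 → K) : K :=
  w 0 * p.rep 2 + w 1 * (-2 * p.rep 1) + w 2 * p.rep 0

/-- The point `r` lies on the passant line `p^⊥`. -/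
def OnPerp (p r : Pt K) : Prop := perpDot K p r.rep = 0

/-- The (finite) set `I` of internal points, as a type. -/
abbrev Ipts := {p : Pt K // Internal K p}

instance : Fintype (Ipts K) := Fintype.ofFinite _

/-- The line through `p` and `r` is a passant. -/
def PassantThru (p r : Pt K) : Prop := ∃ ℓ, OnL K p ℓ ∧ OnL K r ℓ ∧ Passant K ℓ

/-- The line through `p` and `r` is a secant. -/
def SecantThru (p r : Pt K) : Prop := ∃ ℓ, OnL K p ℓ ∧ OnL K r ℓ ∧ Secant K ℓ

/-- The action of a (nonsingular) matrix `M` on points of `PG(2,q)`: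
`p ↦ p·M`.  (If `p.rep ᵥ* M` were zero -- impossible for invertible `M` --
we return `p`, making the function total.) -/
def actPt (M : Matrix (Fin 3) (Fin 3) K) (p : Pt K) : Pt K :=
  if h : Matrix.vecMul p.rep M ≠ 0 then Projectivization.mk K (Matrix.vecMul p.rep M) h else p

/-- The group `H ≅ PSL(2,q)`, given by its set of matrix representatives. -/
def Hset : Set (Matrix (Fin 3) (Fin 3) K) :=
  {M | ∃ a b c d : K, a * d - b * c = 1 ∧
    M = !![a^2, a*b, b^2; 2*a*c, a*d + b*c, 2*b*d; c^2, c*d, d^2]}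

/-- The class set `{g ∈ H : T(g) = tr(g) + 1 = s}` for `s ∈ F_q`. -/
def classOf (s : K) : Set (Matrix (Fin 3) (Fin 3) K) :=
  {g | g ∈ Hset K ∧ Matrix.trace g + 1 = s}

/-- The class set `[4] = {g ∈ H : T(g) = 4, g ≠ 1}`. -/
def class4 : Set (Matrix (Fin 3) (Fin 3) K) :=
  {g | g ∈ Hset K ∧ Matrix.trace g + 1 = 4 ∧ g ≠ 1}

/-- `H_{p,r} = {h ∈ H : r lies on the line (p^⊥)^h}`; the line `(p^⊥)^h` has
coordinate vector `h⁻¹ ⬝ (p^⊥)`, so `r` lies on it iff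
`perpDot p (r.rep ᵥ* h⁻¹) = 0`. -/
def HprSet (p r : Pt K) : Set (Matrix (Fin 3) (Fin 3) K) :=
  {M | M ∈ Hset K ∧ perpDot K p (Matrix.vecMul r.rep M⁻¹) = 0}

/-- The symmetric square of the `2 × 2` matrix `(a, b; c, d)`, acting on row vectors
`(x², xy, y²)`. -/
def symSq (a b c d : K) : Matrix (Fin 3) (Fin 3) K :=
  !![a^2, a*b, b^2; 2*a*c, a*d + b*c, 2*b*d; c^2, c*d, d^2]

/-- The polar form of `-Q`; vectors are conjugate with respect to the conic when it vanishes. -/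
def polarForm (v w : Fin 3 → K) : K := w 0 * v 2 + w 1 * (-2 * v 1) + w 2 * v 0

set_option linter.unusedSectionVars false

variable {K}

lemma symSq_mul (a b c d a' b' c' d' : K) :
    symSq K a b c d * symSq K a' b' c' d' =
      symSq K (a*a' + b*c') (a*b' + b*d') (c*a' + d*c') (c*b' + d*d') := by
  ext i j
  fin_cases i <;> fin_cases j <;>
    simp [symSq, Matrix.mul_apply, Fin.sum_univ_three] <;> ring

lemma symSq_one : symSq K 1 0 0 1 = 1 := by
  ext i j
  fin_cases i <;> fin_cases j <;> simp [symSq]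

lemma vecMul_symSq (v : Fin 3 → K) (a b c d : K) :
    Matrix.vecMul v (symSq K a b c d) =
      ![v 0 * a^2 + v 1 * (2*a*c) + v 2 * c^2,
        v 0 * (a*b) + v 1 * (a*d + b*c) + v 2 * (c*d),
        v 0 * b^2 + v 1 * (2*b*d) + v 2 * d^2] := by
  ext i
  fin_cases i <;> simp [symSq, Matrix.vecMul, dotProduct, Fin.sum_univ_three]

lemma symSq_inv {a b c d : K} (h : a * d - b * c = 1) :
    (symSq K a b c d)⁻¹ = symSq K d (-b) (-c) a := by
  apply Matrix.inv_eq_right_inv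
  rw [symSq_mul, ← symSq_one]
  congr 1 <;> first | linear_combination h | ring

lemma Qf_vecMul_symSq (v : Fin 3 → K) (a b c d : K) :
    Qf K (Matrix.vecMul v (symSq K a b c d)) = (a * d - b * c) ^ 2 * Qf K v := by
  rw [vecMul_symSq]
  simp [Qf]
  ring

lemma polarForm_vecMul_symSq (v w : Fin 3 → K) (a b c d : K) :
    polarForm K (Matrix.vecMul v (symSq K a b c d)) (Matrix.vecMul w (symSq K a b c d)) =
      (a * d - b * c) ^ 2 * polarForm K v w := by
  rw [vecMul_symSq, vecMul_symSq]
  simp [polarForm]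
  ring

lemma symSq_involution {α β γ : K} (h : α ^ 2 + β * γ = 1) :
    symSq K α β γ (-α) * symSq K α β γ (-α) = 1 := by
  rw [symSq_mul, ← symSq_one]
  congr 1 <;> first | linear_combination h | ring

/-- The homology attached to the secant `[β, -2α, -γ]` fixes that line pointwise. -/
lemma vecMul_homology_of_mem {α β γ : K} (h : α ^ 2 + β * γ = 1) {v : Fin 3 → K}
    (hv : β * v 0 - 2 * α * v 1 - γ * v 2 = 0) :
    Matrix.vecMul v (symSq K α β γ (-α)) = v := by
  rw [vecMul_symSq]
  ext i
  fin_cases i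
  · simp
    linear_combination (-γ) * hv + v 0 * h
  · simp
    linear_combination α * hv + v 1 * h
  · simp
    linear_combination β * hv + v 2 * h

/-- In odd characteristic every vector fixed by the homology lies on its axis. -/
lemma mem_of_vecMul_homology {α β γ : K} (h2 : (2 : K) ≠ 0) (h : α ^ 2 + β * γ = 1)
    {v : Fin 3 → K} (hv : Matrix.vecMul v (symSq K α β γ (-α)) = v) :
    β * v 0 - 2 * α * v 1 - γ * v 2 = 0 := by
  rw [vecMul_symSq] at hv
  have e0 := congrFun hv 0
  have e1 := congrFun hv 1
  have e2 := congrFun hv 2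
  simp at e0 e1 e2
  apply mul_left_cancel₀ h2
  linear_combination (-β) * e0 + 2 * α * e1 + γ * e2 +
    (β * v 0 - 2 * α * v 1 - γ * v 2) * (-1) * h

/-- Conjugate vectors on a secant line have `4 Q(u) Q(p) = -k²`: the discriminant of the line
`u × p` is `B(u,p)² - 4 Q(u) Q(p)`, and `u × p` is a multiple of the given secant. -/
lemma neg_four_mul_Qf_mul_Qf {α β γ : K} (h : α ^ 2 + β * γ = 1) {u p : Fin 3 → K}
    (hu : β * u 0 - 2 * α * u 1 - γ * u 2 = 0)
    (hp : β * p 0 - 2 * α * p 1 - γ * p 2 = 0)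
    (hup : polarForm K p u = 0) : ∃ k : K, -(4 * (Qf K u * Qf K p)) = k ^ 2 := by
  set c0 := u 1 * p 2 - u 2 * p 1 with hc0
  set c1 := u 2 * p 0 - u 0 * p 2 with hc1
  set c2 := u 0 * p 1 - u 1 * p 0 with hc2
  have h01 : c0 * (-2 * α) = c1 * β := by
    rw [hc0, hc1]; linear_combination p 2 * hu - u 2 * hp
  have h02 : c0 * (-γ) = c2 * β := by
    rw [hc0, hc2]; linear_combination (-p 1) * hu + u 1 * hp
  have h12 : c1 * (-γ) = c2 * (-2 * α) := by
    rw [hc1, hc2]; linear_combination p 0 * hu - u 0 * hp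
  set k := -α * c1 + γ * c0 - β * c2 with hk
  have k0 : 2 * c0 = k * β := by
    rw [hk]; linear_combination (-2 * c0) * h - α * h01 - β * h02
  have k1 : c1 = -k * α := by
    rw [hk]; linear_combination (-c1) * h - γ * h01 + α * h02
  have k2 : 2 * c2 = -k * γ := by
    rw [hk]; linear_combination (-2 * c2) * h + α * h12 - γ * h02
  have hd : -(4 * (Qf K u * Qf K p)) = c1 ^ 2 - (2 * c0) * (2 * c2) := by
    simp only [polarForm] at hup
    simp only [Qf, hc0, hc1, hc2]
    linear_combination (-(u 0 * p 2 + u 1 * (-2 * p 1) + u 2 * p 0)) * hup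
  refine ⟨k, ?_⟩
  rw [hd, k0, k1, k2]
  linear_combination k ^ 2 * h

lemma isSquare_mul_of_nonsq {x y : K} (hx : Nonsq K x) (hy : Nonsq K y) : IsSquare (x * y) := by
  by_contra hxy
  have e := map_mul (quadraticChar K) x y
  rw [quadraticChar_neg_one_iff_not_isSquare.mpr hx,
    quadraticChar_neg_one_iff_not_isSquare.mpr hy,
    quadraticChar_neg_one_iff_not_isSquare.mpr hxy] at e
  norm_num at e

lemma even_ncard_of_involution {ι : Type*} [Finite ι] (A : Set ι) (f : ι → ι)
    (hf : ∀ x ∈ A, f x ∈ A) (hff : ∀ x ∈ A, f (f x) = x) (hne : ∀ x ∈ A, f x ≠ x) :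
    Even A.ncard := by
  have hA : A.Finite := A.toFinite
  rw [Set.ncard_eq_toFinset_card A hA, ← ZMod.natCast_eq_zero_iff_even, Finset.cast_card]
  refine Finset.sum_involution (fun x _ => f x) ?_ ?_ ?_ ?_
  · intro x _
    decide
  · intro x hx _
    exact hne x (by simpa using hx)
  · intro x hx
    simpa using hf x (by simpa using hx)
  · intro x hx
    exact hff x (by simpa using hx)

/-- The homology can be normalized: a secant line has coordinates `[β, -2α, -γ]` with
`α² + βγ = 1`, after scaling by twice the inverse root of its discriminant. -/
lemma exists_homology_params {p r : Pt K} (h : SecantThru K p r) :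
    ∃ α β γ : K, α ^ 2 + β * γ = 1 ∧
      β * p.rep 0 - 2 * α * p.rep 1 - γ * p.rep 2 = 0 ∧
      β * r.rep 0 - 2 * α * r.rep 1 - γ * r.rep 2 = 0 := by
  obtain ⟨l, hpl, hrl, hd, e, he⟩ := h
  have he0 : e ≠ 0 := by
    rintro rfl
    exact hd (by simpa using he)
  simp only [lineDisc] at he
  simp only [OnL] at hpl hrl
  refine ⟨-l.rep 1 / e, 2 * l.rep 0 / e, -2 * l.rep 2 / e, ?_, ?_, ?_⟩
  · field_simp
    linear_combination he
  · field_simp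
    linear_combination 2 * hpl
  · field_simp
    linear_combination 2 * hrl

/-- `H_{p,r} ∩ C` is even for every `C` whose elements in `H` stay in `C` under conjugation by any
involutory matrix that keeps them in `H`; membership of the homology in `H` is not needed. -/
lemma even_ncard_inter (h3 : Fintype.card K % 4 = 3) {p r : Pt K}
    (hp : Internal K p) (hr : Internal K r) (hline : SecantThru K p r)
    (C : Set (Matrix (Fin 3) (Fin 3) K))
    (hC : ∀ S : Matrix (Fin 3) (Fin 3) K, S * S = 1 → ∀ M ∈ Hset K, S * M * S ∈ Hset K →
      M ∈ C → S * M * S ∈ C) :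
    Even (HprSet K p r ∩ C).ncard := by
  have hneg : ¬ IsSquare (-1 : K) := fun h => FiniteField.isSquare_neg_one_iff.mp h h3
  have h2 : (2 : K) ≠ 0 := fun h => hneg ⟨1, by linear_combination -h⟩
  obtain ⟨α, β, γ, h, hpl, hrl⟩ := exists_homology_params hline
  set S := symSq K α β γ (-α) with hS
  have hSS : S * S = 1 := symSq_involution h
  have hSinv : S⁻¹ = S := Matrix.inv_eq_right_inv hSS
  have hpS : Matrix.vecMul p.rep S = p.rep := vecMul_homology_of_mem h hpl
  have hrS : Matrix.vecMul r.rep S = r.rep := vecMul_homology_of_mem h hrl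
  have hinv : ∀ M, S * (S * M * S) * S = M := fun M => by
    calc S * (S * M * S) * S = (S * S) * M * (S * S) := by simp only [mul_assoc]
      _ = M := by rw [hSS, one_mul, mul_one]
  have hH : ∀ M ∈ Hset K, S * M * S ∈ Hset K := by
    rintro _ ⟨a, b, c, d, hd, rfl⟩
    change S * symSq K a b c d * S ∈ Hset K
    rw [hS, symSq_mul, symSq_mul]
    refine ⟨_, _, _, _, ?_, rfl⟩
    linear_combination (α ^ 2 + β * γ) ^ 2 * hd + (α ^ 2 + β * γ + 1) * h
  refine even_ncard_of_involution _ (fun M => S * M * S) ?_ (fun M _ => hinv M) ?_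
  · rintro M ⟨⟨hM, hperp⟩, hMC⟩
    refine ⟨⟨hH M hM, ?_⟩, hC S hSS M hM (hH M hM) hMC⟩
    change polarForm K p.rep _ = 0
    rw [Matrix.mul_inv_rev, Matrix.mul_inv_rev, hSinv, ← Matrix.vecMul_vecMul, hrS,
      ← Matrix.vecMul_vecMul, ← hpS, polarForm_vecMul_symSq]
    rw [mul_eq_zero]
    exact Or.inr hperp
  · rintro M ⟨⟨⟨a, b, c, d, hd, hMe⟩, hperp⟩, -⟩ hfix
    have hMi : M⁻¹ = symSq K d (-b) (-c) a := by
      rw [hMe]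
      exact symSq_inv hd
    have hcomm : M⁻¹ * S = S * M⁻¹ := by
      have e := congrArg (fun X => X⁻¹) hfix
      simp only [Matrix.mul_inv_rev, hSinv] at e
      calc M⁻¹ * S = (S * S) * (M⁻¹ * S) := by rw [hSS, one_mul]
        _ = S * (S * (M⁻¹ * S)) := by rw [mul_assoc]
        _ = S * M⁻¹ := by rw [e]
    have huS : Matrix.vecMul (Matrix.vecMul r.rep M⁻¹) S = Matrix.vecMul r.rep M⁻¹ := by
      rw [Matrix.vecMul_vecMul, hcomm, ← Matrix.vecMul_vecMul, hrS]
    have hul := mem_of_vecMul_homology h2 h huS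
    obtain ⟨k, hk⟩ := neg_four_mul_Qf_mul_Qf h hul hpl hperp
    have hQ : Qf K (Matrix.vecMul r.rep M⁻¹) = Qf K r.rep := by
      rw [hMi, Qf_vecMul_symSq]
      linear_combination Qf K r.rep * (a * d - b * c + 1) * hd
    rw [hQ] at hk
    obtain ⟨t, ht⟩ := isSquare_mul_of_nonsq hr hp
    have hr0 : Qf K r.rep ≠ 0 := fun e => hr (e ▸ IsSquare.zero)
    have hp0 : Qf K p.rep ≠ 0 := fun e => hp (e ▸ IsSquare.zero)
    have ht0 : t ≠ 0 := by
      rintro rfl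
      exact mul_ne_zero hr0 hp0 (by simpa using ht)
    rw [ht] at hk
    refine hneg ⟨k / (2 * t), ?_⟩
    field_simp
    linear_combination hk

variable (K)

/-- `q ≡ 3 (mod 4)`, `p ≠ r` internal, line `pr` a secant: `|H_{p,r} ∩ C|` is
even for `C = {1}`, `[4]`, every `[θ]`, and every `[π]`. -/
theorem Hpr_parity_secant_three (h3 : Fintype.card K % 4 = 3) (p r : Pt K)
    (hp : Internal K p) (hr : Internal K r) (hne : p ≠ r)
    (hline : SecantThru K p r) :
    Even ((HprSet K p r ∩ {1}).ncard) ∧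
    Even ((HprSet K p r ∩ class4 K).ncard) ∧
    (∀ θ : K, θ ≠ 0 → IsSquare θ → θ ≠ 4 → θ - 4 ≠ 0 → IsSquare (θ - 4) →
      Even ((HprSet K p r ∩ classOf K θ).ncard)) ∧
    (∀ π : K, π ≠ 0 → IsSquare π → π ≠ 4 → Nonsq K (π - 4) →
      Even ((HprSet K p r ∩ classOf K π).ncard)) := by
  have htr : ∀ S : Matrix (Fin 3) (Fin 3) K, S * S = 1 → ∀ M,
      Matrix.trace (S * M * S) = Matrix.trace M := fun S hS M => by
    rw [Matrix.trace_mul_comm, ← mul_assoc, hS, one_mul]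
  have hcls : ∀ s : K, Even ((HprSet K p r ∩ classOf K s).ncard) := fun s =>
    even_ncard_inter h3 hp hr hline _ fun S hS M _ hSM hMC =>
      ⟨hSM, by rw [htr S hS]; exact hMC.2⟩
  refine ⟨?_, ?_, fun θ _ _ _ _ _ => hcls θ, fun π _ _ _ _ => hcls π⟩
  · refine even_ncard_inter h3 hp hr hline _ fun S hS M _ _ hMC => ?_
    rw [Set.mem_singleton_iff] at hMC ⊢
    rw [hMC, mul_one, hS]
  · refine even_ncard_inter h3 hp hr hline _ fun S hS M _ hSM hMC =>
      ⟨hSM, by rw [htr S hS]; exact hMC.2.1, fun h1 => hMC.2.2 ?_⟩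
    calc M = (S * S) * M * (S * S) := by rw [hS, one_mul, mul_one]
      _ = S * (S * M * S) * S := by simp only [mul_assoc]
      _ = 1 := by rw [h1, mul_one, hS]

end ConicPaper
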